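/- Let n ≥ 5 be an odd integer and let G : F_{2^n} → F_{2^n} be given by G(x) = x^{2^n−2} + x. Then there exists c ∈ F_{2^n} with c ≠ 1 such that the c-differential uniformity of G satisfies δ_{G,c} = 4. -/

import Mathlib

open Finset

/-- The `(c,a,b)` entry of the `c`-Difference Distribution Table of `G`:
the number of `x` with `G (x + a) - c * G x = b`. -/
def cddt {F : Type*} [Field F] [Fintype F] [DecidableEq F]
    (G : F → F) (c a b : F) : ℕ :=
  (Finset.univ.filter fun x : F => G (x + a) - c * G x = b).card

/-- The `c`-differential uniformity of `G`: the maximum entry of the `c`-DDT,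
where `a ≠ 0` is required only when `c = 1`. -/
def cdu {F : Type*} [Field F] [Fintype F] [DecidableEq F]
    (G : F → F) (c : F) : ℕ :=
  ((Finset.univ : Finset (F × F)).filter fun p => c = 1 → p.1 ≠ 0).sup
    fun p => cddt G c p.1 p.2

/-!
For `c ≠ 1`, clearing denominators in `G (x + a) - c * G x = b` leaves a cubic in `x`, so an entry
can exceed four only when both excluded points `0` and `-a` are solutions. In characteristic two
this forces `a = 1` and `b = 0`, where `G x = (x + 1) ^ 2 / x` turns the equation into
`(x / (x + 1)) ^ 3 = c`; hence the uniformity is at most four as soon as `c` has at most two cube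
roots.

Conversely, when `0` and three roots of the cubic are to be solutions, the substitution
`x = a / (1 + v)` turns the cubic into one whose roots sum to zero and have product `c⁻¹`. Starting
from roots `p`, `q`, `p + q`, one recovers `c = (p * q * (p + q))⁻¹` and, by a square root, `a`.
With `q = p * t`, the number of cube roots of `c` is that of `t * (t + 1)`, and counting the pairs
with `w ^ 3 = t * (t + 1)` in two ways provides a `t` for which it is at most two.
-/

open Polynomial

lemma pow_card_sub_two_eq_inv {F : Type*} [Field F] [Fintype F] (hF : 2 < Fintype.card F) (x : F) :
    x ^ (Fintype.card F - 2) = x⁻¹ := by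
  rcases eq_or_ne x 0 with rfl | hx
  · rw [zero_pow (by omega), inv_zero]
  · refine eq_inv_of_mul_eq_one_left ?_
    rw [← pow_succ, show Fintype.card F - 2 + 1 = Fintype.card F - 1 by omega,
      FiniteField.pow_card_sub_one_eq_one x hx]

lemma div_add_one_injOn {F : Type*} [Field F] :
    Set.InjOn (fun x : F => x / (x + 1)) {x | x + 1 ≠ 0} := by
  intro x (hx : x + 1 ≠ 0) y (hy : y + 1 ≠ 0) h
  rw [div_eq_div_iff hx hy] at h
  linear_combination h

lemma exists_sq_mul_eq {F : Type*} [Field F] [Finite F] [CharP F 2] {x : F} (hx : x ≠ 0)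
    (y : F) : ∃ a, a ^ 2 * x = y := by
  obtain ⟨a, ha⟩ := FiniteField.isSquare_of_char_two (ringChar.eq F 2) (y / x)
  exact ⟨a, by rw [sq, ← ha, div_mul_cancel₀ y hx]⟩

lemma pow_three_add_mul_eq {R : Type*} [CommRing R] [CharP R 2] {p q v : R}
    (hv : v = p ∨ v = q ∨ v = p + q) :
    v ^ 3 + (p ^ 2 + p * q + q ^ 2) * v = p * q * (p + q) := by
  have two_eq_zero : (2 : R) = 0 := CharTwo.two_eq_zero
  rcases hv with rfl | rfl | rfl
  · linear_combination v ^ 3 * two_eq_zero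
  · linear_combination v ^ 3 * two_eq_zero
  · linear_combination (p ^ 3 + 2 * p ^ 2 * q + 2 * p * q ^ 2 + q ^ 3) * two_eq_zero

section CubeRoots

lemma card_nthRootsFinset_le {R : Type*} [CommRing R] [IsDomain R] (n : ℕ) (a : R) :
    #(nthRootsFinset n a) ≤ n := by
  classical
  rw [nthRootsFinset_def]
  exact (Multiset.toFinset_card_le _).trans (card_nthRoots n a)

lemma card_eq_mul_add_one_le_two {R : Type*} [CommRing R] [IsDomain R] [Fintype R] [DecidableEq R]
    (s : R) : #{t : R | s = t * (t + 1)} ≤ 2 := by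
  rcases eq_empty_or_nonempty ({t : R | s = t * (t + 1)} : Finset R) with h | ⟨u, hu⟩
  · simp [h]
  refine (card_le_card fun t ht => ?_).trans (card_le_two (a := u) (b := -1 - u))
  rw [mem_filter_univ] at hu ht
  have hfactor : (t - u) * (t - (-1 - u)) = 0 := by linear_combination hu - ht
  rw [mem_insert, mem_singleton]
  exact (mul_eq_zero.1 hfactor).imp sub_eq_zero.1 sub_eq_zero.1

variable {F : Type*} [Field F]

lemma card_nthRootsFinset_inv_pow_mul_le {n : ℕ} (hn : 0 < n) {p : F} (hp : p ≠ 0) (τ : F) :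
    #(nthRootsFinset n (p ^ n * τ)⁻¹) ≤ #(nthRootsFinset n τ) := by
  refine card_le_card_of_injOn (fun w => (p * w)⁻¹) (fun w hw => ?_) fun w _ w' _ h => ?_
  · rw [mem_coe, mem_nthRootsFinset hn] at hw ⊢
    rw [inv_pow, mul_pow, hw, mul_inv, inv_inv, inv_mul_cancel_left₀ (pow_ne_zero n hp)]
  · exact mul_left_cancel₀ hp (inv_injective h)

variable [Fintype F]

lemma exists_card_cubeRoots_mul_add_one_le_two (hF : 4 < Fintype.card F) :
    ∃ t : F, t ≠ 0 ∧ t + 1 ≠ 0 ∧ #(nthRootsFinset 3 (t * (t + 1))) ≤ 2 := by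
  classical
  by_contra! hmany
  have hcount : #(univ \ {0, -1} : Finset F) * 3 ≤ #(univ.erase (0 : F)) * 2 := by
    refine card_mul_le_card_mul (fun t w => w ^ 3 = t * (t + 1)) (fun t ht => ?_) fun w _ => ?_
    · simp only [mem_sdiff, mem_univ, true_and, mem_insert, mem_singleton, not_or] at ht
      have ht1 : t + 1 ≠ 0 := mt eq_neg_of_add_eq_zero_left ht.2
      refine (Nat.succ_le_of_lt (hmany t ht.1 ht1)).trans (card_le_card fun w hw => ?_)
      have hw0 : w ≠ 0 := ne_zero_of_mem_nthRootsFinset (mul_ne_zero ht.1 ht1) hw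
      rw [mem_nthRootsFinset three_pos] at hw
      exact mem_filter.2 ⟨mem_erase.2 ⟨hw0, mem_univ w⟩, hw⟩
    · exact (card_le_card (filter_subset_filter _ (subset_univ _))).trans
        (card_eq_mul_add_one_le_two (w ^ 3))
  have hcard : Fintype.card F - 2 ≤ #(univ \ {0, -1} : Finset F) :=
    (Nat.sub_le_sub_left card_le_two _).trans (le_card_sdiff {0, -1} univ)
  rw [card_erase_of_mem (mem_univ _), card_univ] at hcount
  omega

lemma exists_card_cubeRoots_le_two (hF : 8 ≤ Fintype.card F) :
    ∃ p q : F, p * q * (p + q) ≠ 0 ∧ (1 + p) * (1 + q) * (1 + (p + q)) ≠ 0 ∧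
      p * q * (p + q) ≠ 1 ∧ #(nthRootsFinset 3 (p * q * (p + q))⁻¹) ≤ 2 := by
  classical
  obtain ⟨t, ht0, ht1, hroots⟩ := exists_card_cubeRoots_mul_add_one_le_two (F := F) (by omega)
  have hexcl : #(({0, -1, -t⁻¹, -(t + 1)⁻¹} : Finset F) ∪ nthRootsFinset 3 (t * (t + 1))⁻¹) <
      #(univ : Finset F) := by
    have := card_nthRootsFinset_le 3 (t * (t + 1))⁻¹
    exact (card_union_le _ _).trans_lt (by grind [card_le_four])
  obtain ⟨p, -, hp⟩ := exists_mem_notMem_of_card_lt_card hexcl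
  simp only [mem_union, mem_insert, mem_singleton, mem_nthRootsFinset three_pos, not_or] at hp
  obtain ⟨⟨hp0, hp1, hpt, hpt1⟩, hp3⟩ := hp
  have one_add_ne {y : F} (hy : y ≠ 0) (hpy : p ≠ -y⁻¹) : 1 + p * y ≠ 0 := by
    refine fun h => hpy ?_
    field_simp
    linear_combination h
  have hsum : p + p * t = p * (t + 1) := by ring
  have hm : p * (p * t) * (p + p * t) = p ^ 3 * (t * (t + 1)) := by ring
  refine ⟨p, p * t, ?_, mul_ne_zero (mul_ne_zero ?_ ?_) ?_, ?_, ?_⟩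
  · rw [hm]
    exact mul_ne_zero (pow_ne_zero 3 hp0) (mul_ne_zero ht0 ht1)
  · exact fun h => hp1 (eq_neg_of_add_eq_zero_right h)
  · exact one_add_ne ht0 hpt
  · rw [hsum]
    exact one_add_ne ht1 hpt1
  · rw [hm]
    exact fun h => hp3 (eq_inv_of_mul_eq_one_left h)
  · rw [hm]
    exact (card_nthRootsFinset_inv_pow_mul_le three_pos hp0 _).trans hroots

end CubeRoots

section DifferenceTable

variable {F : Type*} [Field F] [Fintype F] [DecidableEq F]

/-- The solution set of `G (x + a) - c * G x = b`, whose cardinality is the entry `cddt G c a b`. -/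
def cddtSolutions (G : F → F) (c a b : F) : Finset F := {x | G (x + a) - c * G x = b}

lemma mem_cddtSolutions {G : F → F} {c a b x : F} :
    x ∈ cddtSolutions G c a b ↔ G (x + a) - c * G x = b := mem_filter_univ x

lemma card_cddtSolutions (G : F → F) (c a b : F) : #(cddtSolutions G c a b) = cddt G c a b := rfl

lemma cddt_le_cdu (G : F → F) {c : F} (hc : c ≠ 1) (a b : F) : cddt G c a b ≤ cdu G c :=
  le_sup (f := fun p : F × F => cddt G c p.1 p.2) (b := (a, b))
    (mem_filter.2 ⟨mem_univ _, fun h => absurd h hc⟩)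

lemma cdu_le {G : F → F} {c : F} {k : ℕ} (h : ∀ a b, cddt G c a b ≤ k) : cdu G c ≤ k :=
  Finset.sup_le fun p _ => h p.1 p.2

end DifferenceTable

/-- The function `x ↦ x⁻¹ + x`, the inverse function perturbed by the identity; `0` is sent to
`0`. -/
def invAddId {F : Type*} [Field F] (x : F) : F := x⁻¹ + x

namespace invAddId

section Field

variable {F : Type*} [Field F]

@[simp]
lemma apply_zero : invAddId (0 : F) = 0 := by simp [invAddId]

@[simp]
lemma apply_neg (x : F) : invAddId (-x) = -invAddId x := by
  simp only [invAddId, inv_neg]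
  ring

lemma cubic_eq_zero {a b c x : F} (hx : x ≠ 0) (hxa : x + a ≠ 0)
    (h : invAddId (x + a) - c * invAddId x = b) :
    (1 - c) * x ^ 3 + (2 * a - c * a - b) * x ^ 2 + (1 - c + a ^ 2 - a * b) * x + -(c * a) = 0 := by
  unfold invAddId at h
  field_simp at h
  linear_combination h

lemma card_solutions_sdiff_le_three [Fintype F] [DecidableEq F] {c : F} (hc : c ≠ 1) (a b : F) :
    #(cddtSolutions invAddId c a b \ {0, -a}) ≤ 3 := by
  let P : Cubic F := ⟨1 - c, 2 * a - c * a - b, 1 - c + a ^ 2 - a * b, -(c * a)⟩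
  have hP : P.toPoly ≠ 0 := Cubic.ne_zero_of_a_ne_zero (sub_ne_zero.2 hc.symm)
  refine (card_le_card fun x hx => ?_).trans (Cubic.card_roots_le (P := P))
  simp only [mem_sdiff, mem_cddtSolutions, mem_insert, mem_singleton, not_or] at hx
  obtain ⟨hsol, hx0, hxa⟩ := hx
  rw [Multiset.mem_toFinset, Cubic.mem_roots_iff hP]
  exact cubic_eq_zero hx0 (mt eq_neg_of_add_eq_zero_left hxa) hsol

lemma eq_zero_of_solution_zero_of_solution_neg {a b c : F} (hc : c ≠ 1)
    (h0 : invAddId (0 + a) - c * invAddId 0 = b)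
    (ha : invAddId (-a + a) - c * invAddId (-a) = b) : invAddId a = 0 ∧ b = 0 := by
  simp only [zero_add, apply_zero, mul_zero, sub_zero, neg_add_cancel, apply_neg, zero_sub,
    mul_neg, neg_neg] at h0 ha
  have hG : (1 - c) * invAddId a = 0 := by linear_combination h0 - ha
  have hG := (mul_eq_zero.1 hG).resolve_left (sub_ne_zero.2 hc.symm)
  exact ⟨hG, h0 ▸ hG⟩

end Field

section CharTwo

variable {F : Type*} [Field F] [CharP F 2]

lemma eq_zero_iff {x : F} : invAddId x = 0 ↔ x = 0 ∨ x = 1 := by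
  refine ⟨fun h => or_iff_not_imp_left.2 fun hx => ?_, ?_⟩
  · have hsq : x ^ 2 = 1 ^ 2 := by
      rw [invAddId, CharTwo.add_eq_zero, inv_eq_iff_eq_inv] at h
      rw [sq, one_pow]
      nth_rewrite 1 [h]
      exact inv_mul_cancel₀ hx
    exact CharTwo.sq_inj.1 hsq
  · rintro (rfl | rfl)
    · exact apply_zero
    · rw [invAddId, inv_one, CharTwo.add_self_eq_zero]

lemma div_add_one_pow_three_eq {c x : F} (hx0 : x ≠ 0) (hx1 : x + 1 ≠ 0)
    (h : invAddId (x + 1) - c * invAddId x = 0) : (x / (x + 1)) ^ 3 = c := by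
  have two_eq_zero : (2 : F) = 0 := CharTwo.two_eq_zero
  unfold invAddId at h
  field_simp at h ⊢
  linear_combination h - x * (1 + x) * (1 + c) * two_eq_zero

lemma solution_of_root {a m s v : F} (ha : a ≠ 0) (hm : m ≠ 0) (hv1 : 1 + v ≠ 0)
    (hroot : v ^ 3 + s * v = m) (hsq : a ^ 2 * (m + 1) = m + 1 + s) :
    invAddId (a / (1 + v) + a) - m⁻¹ * invAddId (a / (1 + v)) = invAddId a := by
  have two_eq_zero : (2 : F) = 0 := CharTwo.two_eq_zero
  have hv0 : v ≠ 0 := by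
    rintro rfl
    exact hm (by rw [← hroot, zero_pow three_ne_zero, mul_zero, add_zero])
  have hshift : a / (1 + v) + a = a * v / (1 + v) := by
    field_simp
    linear_combination two_eq_zero
  rw [hshift]
  unfold invAddId
  field_simp
  linear_combination -hroot - v * hsq - v * (1 + v) * two_eq_zero

variable [Fintype F] [DecidableEq F]

lemma card_solutions_one_zero_sdiff_le {c : F} :
    #(cddtSolutions invAddId c 1 0 \ {0, -1}) ≤ #(nthRootsFinset 3 c) := by
  refine card_le_card_of_injOn (fun x => x / (x + 1)) (fun x hx => ?_)
    (div_add_one_injOn.mono fun x hx => ?_)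
  all_goals
    simp only [coe_sdiff, Set.mem_sdiff, mem_coe, mem_cddtSolutions, mem_insert, mem_singleton,
      not_or] at hx
    obtain ⟨hsol, hx0, hx1⟩ := hx
    have hx1 : x + 1 ≠ 0 := mt eq_neg_of_add_eq_zero_left hx1
  · exact (mem_nthRootsFinset three_pos c).2 (div_add_one_pow_three_eq hx0 hx1 hsol)
  · exact hx1

theorem cddt_le_four {c : F} (hc : c ≠ 1) (hroots : #(nthRootsFinset 3 c) ≤ 2) (a b : F) :
    cddt invAddId c a b ≤ 4 := by
  set S := cddtSolutions invAddId c a b with hS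
  rw [← card_cddtSolutions, ← hS]
  have hsplit : #(S ∩ {0, -a}) + #(S \ {0, -a}) = #S := card_inter_add_card_sdiff S {0, -a}
  have hcubic : #(S \ {0, -a}) ≤ 3 := card_solutions_sdiff_le_three hc a b
  by_cases hpair : #(S ∩ {0, -a}) ≤ 1
  · omega
  obtain ⟨h0, ha, hne⟩ : 0 ∈ S ∧ -a ∈ S ∧ a ≠ 0 := by
    obtain ⟨x, hx, y, hy, hxy⟩ := one_lt_card.1 (not_le.1 hpair)
    grind
  rw [hS, mem_cddtSolutions] at h0 ha
  obtain ⟨hGa, rfl⟩ := eq_zero_of_solution_zero_of_solution_neg hc h0 ha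
  obtain rfl : a = 1 := (eq_zero_iff.1 hGa).resolve_left hne
  have hexc : #(S ∩ {0, -1}) ≤ 2 := (card_le_card inter_subset_right).trans card_le_two
  have hrest : #(S \ {0, -1}) ≤ #(nthRootsFinset 3 c) := card_solutions_one_zero_sdiff_le
  omega

lemma card_add_one_le_cddt {a m s : F} (ha : a ≠ 0) (hm : m ≠ 0)
    (hsq : a ^ 2 * (m + 1) = m + 1 + s) {V : Finset F}
    (hV : ∀ v ∈ V, 1 + v ≠ 0 ∧ v ^ 3 + s * v = m) :
    #V + 1 ≤ cddt invAddId m⁻¹ a (invAddId a) := by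
  have hinj : Function.Injective fun v => a / (1 + v) := fun v w h =>
    add_left_cancel (inv_injective (mul_left_cancel₀ ha (by simpa only [div_eq_mul_inv] using h)))
  have hzero : 0 ∉ V.image fun v => a / (1 + v) := by
    rw [mem_image]
    rintro ⟨v, hv, h⟩
    exact div_ne_zero ha (hV v hv).1 h
  rw [← card_image_of_injective V hinj, ← card_insert_of_notMem hzero, ← card_cddtSolutions]
  refine card_le_card (insert_subset ?_ (image_subset_iff.2 fun v hv => ?_))
  · rw [mem_cddtSolutions, zero_add, apply_zero, mul_zero, sub_zero]
  · obtain ⟨hv1, hroot⟩ := hV v hv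
    exact mem_cddtSolutions.2 (solution_of_root ha hm hv1 hroot hsq)

theorem exists_four_le_cddt {p q : F} (hm0 : p * q * (p + q) ≠ 0)
    (hv1 : (1 + p) * (1 + q) * (1 + (p + q)) ≠ 0) (hm1 : p * q * (p + q) ≠ 1) :
    ∃ a b, 4 ≤ cddt invAddId (p * q * (p + q))⁻¹ a b := by
  set m := p * q * (p + q)
  set s := p ^ 2 + p * q + q ^ 2
  obtain ⟨a, hsq⟩ := exists_sq_mul_eq (mt CharTwo.add_eq_zero.1 hm1) (m + 1 + s)
  have hprod : (1 + p) * (1 + q) * (1 + (p + q)) = m + 1 + s := by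
    linear_combination (p + q + p * q) * CharTwo.two_eq_zero (R := F)
  have ha : a ≠ 0 := by
    rintro rfl
    exact hv1 (by rw [hprod, ← hsq, zero_pow two_ne_zero, zero_mul])
  obtain ⟨⟨hp, hq⟩, hpq⟩ := (mul_ne_zero_iff.trans (and_congr_left' mul_ne_zero_iff)).1 hm0
  obtain ⟨⟨hp1, hq1⟩, hpq1⟩ := (mul_ne_zero_iff.trans (and_congr_left' mul_ne_zero_iff)).1 hv1
  have hcard : #{p, q, p + q} = 3 := card_eq_three.2
    ⟨p, q, p + q, mt CharTwo.add_eq_zero.2 hpq, left_ne_add.2 hq, right_ne_add.2 hp, rfl⟩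
  refine ⟨a, invAddId a, ?_⟩
  rw [show 4 = #{p, q, p + q} + 1 by rw [hcard]]
  refine card_add_one_le_cddt ha hm0 hsq fun v hv => ?_
  simp only [mem_insert, mem_singleton] at hv
  refine ⟨?_, pow_three_add_mul_eq hv⟩
  rcases hv with rfl | rfl | rfl <;> assumption

end CharTwo

end invAddId

theorem exists_cdu_invAddId_eq_four {F : Type*} [Field F] [CharP F 2] [Fintype F] [DecidableEq F]
    (hF : 8 ≤ Fintype.card F) : ∃ c : F, c ≠ 1 ∧ cdu (invAddId : F → F) c = 4 := by
  obtain ⟨p, q, hm0, hv1, hm1, hroots⟩ := exists_card_cubeRoots_le_two hF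
  have hc : (p * q * (p + q))⁻¹ ≠ 1 := inv_ne_one.2 hm1
  obtain ⟨a, b, hab⟩ := invAddId.exists_four_le_cddt hm0 hv1 hm1
  exact ⟨_, hc, le_antisymm (cdu_le (invAddId.cddt_le_four hc hroots))
    (hab.trans (cddt_le_cdu _ hc a b))⟩

theorem exists_c_cdu_eq_four_odd_general
    {F : Type*} [Field F] [Fintype F] [DecidableEq F]
    (n : ℕ) (hn : 3 ≤ n) (hF : Fintype.card F = 2 ^ n)
    (G : F → F) (hG : ∀ x : F, G x = x ^ (2 ^ n - 2) + x) :
    ∃ c : F, c ≠ 1 ∧ cdu G c = 4 := by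
  have hcard : 8 ≤ Fintype.card F := hF ▸ Nat.pow_le_pow_right two_pos hn
  have hchar : CharP F 2 := charP_of_card_eq_prime_pow hF
  have hG' : G = invAddId := funext fun x => by
    rw [hG, ← hF, pow_card_sub_two_eq_inv (by omega), invAddId]
  exact hG' ▸ exists_cdu_invAddId_eq_four hcard

theorem exists_c_cdu_eq_four_odd
    {F : Type*} [Field F] [Fintype F] [DecidableEq F]
    (n : ℕ) (hn : 5 ≤ n) (hnodd : Odd n)
    (hF : Fintype.card F = 2 ^ n)
    (G : F → F) (hG : ∀ x : F, G x = x ^ (2 ^ n - 2) + x) :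
    ∃ c : F, c ≠ 1 ∧ cdu G c = 4 :=
  exists_c_cdu_eq_four_odd_general n (by omega) hF G hG
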